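/- Define Q(u,v) = Γ(u,v)/Γ(u) for u > 0 and v ≥ 0, and for fixed u > 0 and v ∈ (0,1) let Q^{−1}(u,v) denote the unique q > 0 with Q(u,q) = v. Fix u > 0. Then the function (c,v) ↦ C_c(u,v) := Γ(c+u, Q^{−1}(u,v))/Γ(c+u) is strictly reverse-rule of order infinity in (c,v): for every r ≥ 1, all c₁ > c₂ > ⋯ > c_r > 0 and all 1 > v₁ > v₂ > ⋯ > v_r > 0, the quantity (−1)^{r(r−1)/2} · det( (C_{c_i}(u,v_j))_{i,j=1}^r ) is strictly positive. -/

import Mathlib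

open MeasureTheory

/-- The upper incomplete gamma function `Γ(u,v) = ∫_v^∞ x^(u-1) e^(-x) dx`. -/
noncomputable def upperGamma (u v : ℝ) : ℝ :=
  ∫ x in Set.Ioi v, x ^ (u - 1) * Real.exp (-x)

/-!
Reversing the order of the columns absorbs the sign `(-1)^{r(r-1)/2}`, so the claim is that
`(s, y) ↦ Γ(s, y) / Γ(s)` has positive minors when both variables decrease. Subtracting from each
column its predecessor turns the minor `det (Γ(s_i, y_j))` into the determinant of the integrals of
`t^(s_i-1) e^(-t)` over the successive intervals `(y_0, ∞), (y_1, y_0], (y_2, y_1], …`. Such a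
determinant is an iterated integral of the determinants `det (t_j^(s_i-1) e^(-t_j))` with
`t_0 > t_1 > ⋯`, so it is positive because the kernel `t^s = exp (s log t)` has positive minors.
For the exponential kernel the same device works by induction on the size: after division by
`exp (x_0 y_j)` the first row is constant, and the differences of consecutive columns are integrals
of a smaller exponential minor.
-/

open Set

section Determinants

theorem det_eq_det_col_sub_of_row_zero_eq_one {R : Type*} [CommRing R] {n : ℕ}
    (A : Matrix (Fin (n + 1)) (Fin (n + 1)) R) (hA : ∀ j, A 0 j = 1) :
    A.det = (Matrix.of fun i j : Fin n => A i.succ j.succ - A i.succ j.castSucc).det := by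
  let B : Matrix (Fin (n + 1)) (Fin (n + 1)) R :=
    Matrix.of fun i => Fin.cons (A i 0) fun j => A i j.succ - A i j.castSucc
  have hAB : A.det = B.det :=
    Matrix.det_eq_of_forall_col_eq_smul_add_pred 1 (fun i => by simp [B]) fun i j => by simp [B]
  rw [hAB, Matrix.det_succ_row_zero, Fin.sum_univ_succ]
  have hB : B.submatrix Fin.succ Fin.succ =
      Matrix.of fun i j : Fin n => A i.succ j.succ - A i.succ j.castSucc := by
    ext i j
    simp [B]
  simp [B, hA, ← hB]

theorem sign_revPerm (n : ℕ) :
    Equiv.Perm.sign (Fin.revPerm : Equiv.Perm (Fin n)) = (-1) ^ (n * (n - 1) / 2) := by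
  rw [Equiv.Perm.sign_eq_prod_prod_Iio]
  have hinv : ∀ j : Fin n, ∀ i ∈ Finset.Iio j,
      (if Fin.revPerm i < Fin.revPerm j then 1 else -1 : ℤˣ) = -1 := fun j i hi =>
    if_neg (by simpa using (Finset.mem_Iio.1 hi).le)
  calc _ = ∏ j : Fin n, (-1 : ℤˣ) ^ (j : ℕ) :=
        Finset.prod_congr rfl fun j _ => by rw [Finset.prod_congr rfl (hinv j)]; simp
    _ = (-1) ^ (n * (n - 1) / 2) := by
        rw [Finset.prod_pow_eq_pow_sum, Fin.sum_univ_eq_sum_range fun k => k, Finset.sum_range_id]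

theorem det_updateCol_eq_sum_adjugate {ι R : Type*} [Fintype ι] [DecidableEq ι] [CommRing R]
    (A : Matrix ι ι R) (k : ι) (b : ι → R) : (A.updateCol k b).det = ∑ i, A.adjugate k i * b i := by
  rw [← Matrix.cramer_apply, Matrix.cramer_eq_adjugate_mulVec]
  rfl

variable {X : Type*} [MeasurableSpace X] {μ : Measure X}

theorem setIntegral_pos_of_forall_pos {f : X → ℝ} {s : Set X} (hs : MeasurableSet s)
    (hμs : μ s ≠ 0) (hf : IntegrableOn f s μ) (hpos : ∀ x ∈ s, 0 < f x) :
    0 < ∫ x in s, f x ∂μ := by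
  have hnonneg : 0 ≤ᵐ[μ.restrict s] f :=
    (ae_restrict_mem hs).mono fun x hx => (hpos x hx).le
  have hsupp : Function.support f ∩ s = s := inter_eq_right.2 fun x hx => (hpos x hx).ne'
  rw [setIntegral_pos_iff_support_of_nonneg_ae hnonneg hf, hsupp]
  exact pos_iff_ne_zero.2 hμs

variable {ι : Type*} [Fintype ι] [DecidableEq ι]

theorem integrable_det_updateCol (A : Matrix ι ι ℝ) (k : ι) {f : ι → X → ℝ}
    (hf : ∀ i, Integrable (f i) μ) :
    Integrable (fun x => (A.updateCol k fun i => f i x).det) μ := by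
  simp only [det_updateCol_eq_sum_adjugate]
  exact integrable_finsetSum _ fun i _ => (hf i).const_mul _

theorem det_updateCol_integral (A : Matrix ι ι ℝ) (k : ι) {f : ι → X → ℝ}
    (hf : ∀ i, Integrable (f i) μ) :
    (A.updateCol k fun i => ∫ x, f i x ∂μ).det = ∫ x, (A.updateCol k fun i => f i x).det ∂μ := by
  simp only [det_updateCol_eq_sum_adjugate]
  rw [integral_finsetSum _ fun i _ => (hf i).const_mul _]
  simp only [integral_const_mul]

theorem det_setIntegral_pos {f : ι → X → ℝ} {s : ι → Set X} (hs : ∀ j, MeasurableSet (s j))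
    (hμs : ∀ j, μ (s j) ≠ 0) (hf : ∀ i j, IntegrableOn (f i) (s j) μ)
    (hdet : ∀ x : ι → X, (∀ j, x j ∈ s j) → 0 < (Matrix.of fun i j => f i (x j)).det) :
    0 < (Matrix.of fun i j => ∫ x in s j, f i x ∂μ).det := by
  -- The columns are integrated one at a time; `T` is the set of columns already integrated.
  let M (T : Finset ι) (x : ι → X) : Matrix ι ι ℝ :=
    Matrix.of fun i j => if j ∈ T then ∫ t in s j, f i t ∂μ else f i (x j)
  have hM : ∀ T x, (∀ j, x j ∈ s j) → 0 < (M T x).det := by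
    intro T
    induction T using Finset.induction_on with
    | empty => simpa [M] using hdet
    | insert k T hk ih =>
      intro x hx
      have hintegrated : M (insert k T) x = (M T x).updateCol k fun i => ∫ t in s k, f i t ∂μ := by
        ext i j
        by_cases hj : j = k <;> simp [M, hj]
      have hpoint (t : X) :
          M T (Function.update x k t) = (M T x).updateCol k fun i => f i t := by
        ext i j
        by_cases hj : j = k <;> simp [M, hj, hk]
      rw [hintegrated, det_updateCol_integral _ _ fun i => hf i k]
      refine setIntegral_pos_of_forall_pos (hs k) (hμs k)
        (integrable_det_updateCol _ _ fun i => hf i k) fun t ht => ?_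
      rw [← hpoint]
      refine ih _ fun j => ?_
      by_cases hj : j = k
      · subst hj; simpa using ht
      · simpa [hj] using hx j
  choose x hx using fun j => nonempty_of_measure_ne_zero (hμs j)
  simpa [M] using hM Finset.univ x hx

end Determinants

section DescendingIntervals

variable {β : Type*} [LinearOrder β] {n : ℕ}

/-- The consecutive intervals `(b 0, ∞), (b 1, b 0], (b 2, b 1], …` cut out by points
`b 0 ≥ b 1 ≥ ⋯`; the ray `(b j, ∞)` is the union of the first `j + 1` of them. -/
def descendingInterval (b : Fin (n + 1) → β) : Fin (n + 1) → Set β :=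
  Fin.cons (Ioi (b 0)) fun j => Ioc (b j.succ) (b j.castSucc)

@[simp]
theorem descendingInterval_zero (b : Fin (n + 1) → β) : descendingInterval b 0 = Ioi (b 0) := by
  simp only [descendingInterval, Fin.cons_zero]

@[simp]
theorem descendingInterval_succ (b : Fin (n + 1) → β) (j : Fin n) :
    descendingInterval b j.succ = Ioc (b j.succ) (b j.castSucc) := by
  simp only [descendingInterval, Fin.cons_succ]

theorem descendingInterval_subset_Ioi (b : Fin (n + 1) → β) (j : Fin (n + 1)) :
    descendingInterval b j ⊆ Ioi (b j) := by
  cases j using Fin.cases with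
  | zero => simp
  | succ j => simpa using Ioc_subset_Ioi_self

theorem descendingInterval_subset_Iic {b : Fin (n + 1) → β} (hb : Antitone b)
    {j k : Fin (n + 1)} (hjk : j < k) : descendingInterval b k ⊆ Iic (b j) := by
  cases k using Fin.cases with
  | zero => exact absurd hjk (Fin.not_lt_zero j)
  | succ k =>
    rw [descendingInterval_succ]
    exact Ioc_subset_Iic_self.trans (Iic_subset_Iic.2 (hb (Fin.le_castSucc_iff.2 hjk)))

theorem strictAnti_of_mem_descendingInterval {b x : Fin (n + 1) → β} (hb : Antitone b)
    (hx : ∀ j, x j ∈ descendingInterval b j) : StrictAnti x := fun j k hjk =>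
  (descendingInterval_subset_Iic hb hjk (hx k)).trans_lt (descendingInterval_subset_Ioi b j (hx j))

variable [TopologicalSpace β] [OrderClosedTopology β] [MeasurableSpace β] {μ : Measure β}

theorem measure_descendingInterval_ne_zero [DenselyOrdered β] [NoMaxOrder β]
    [μ.IsOpenPosMeasure] {b : Fin (n + 1) → β} (hb : StrictAnti b) (j : Fin (n + 1)) :
    μ (descendingInterval b j) ≠ 0 := by
  cases j using Fin.cases with
  | zero => simpa using isOpen_Ioi.measure_ne_zero μ nonempty_Ioi
  | succ j =>
    have hIoo := isOpen_Ioo.measure_ne_zero μ (nonempty_Ioo.2 (hb j.castSucc_lt_succ))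
    rw [descendingInterval_succ]
    exact fun h => hIoo (measure_mono_null Ioo_subset_Ioc_self h)

variable [OpensMeasurableSpace β]

theorem measurableSet_descendingInterval (b : Fin (n + 1) → β) (j : Fin (n + 1)) :
    MeasurableSet (descendingInterval b j) := by
  cases j using Fin.cases with
  | zero => simp
  | succ j => simp

theorem det_setIntegral_Ioi_eq_det_setIntegral_descendingInterval
    {f : Fin (n + 1) → β → ℝ} {b : Fin (n + 1) → β} (hb : Antitone b)
    (hf : ∀ i j, IntegrableOn (f i) (Ioi (b j)) μ) :
    (Matrix.of fun i j => ∫ t in Ioi (b j), f i t ∂μ).det =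
      (Matrix.of fun i j => ∫ t in descendingInterval b j, f i t ∂μ).det := by
  refine Matrix.det_eq_of_forall_col_eq_smul_add_pred 1 (fun i => by simp) fun i j => ?_
  simp only [Matrix.of_apply, descendingInterval_succ, Pi.one_apply, one_mul]
  rw [← Ioc_union_Ioi_eq_Ioi (hb j.castSucc_lt_succ.le),
    setIntegral_union Ioc_disjoint_Ioi_same measurableSet_Ioi
      ((hf i _).mono_set Ioc_subset_Ioi_self) (hf i _)]

end DescendingIntervals

/-- Strict total positivity (of order infinity) of a kernel `K` on `s × t`: all minors with rows
in `s` and columns in `t` are positive. Rows and columns are listed in decreasing order, as in the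
definition of reverse-rule kernels; listing both in increasing order gives the same minors. -/
def StrictTotallyPositiveOn {α β : Type*} [Preorder α] [Preorder β] (K : α → β → ℝ)
    (s : Set α) (t : Set β) : Prop :=
  ∀ ⦃n : ℕ⦄ ⦃a : Fin n → α⦄ ⦃b : Fin n → β⦄, StrictAnti a → StrictAnti b →
    (∀ i, a i ∈ s) → (∀ j, b j ∈ t) → 0 < (Matrix.of fun i j => K (a i) (b j)).det

namespace StrictTotallyPositiveOn

variable {α β : Type*} [Preorder α] [Preorder β] {K : α → β → ℝ} {s : Set α} {t : Set β}

theorem pos (hK : StrictTotallyPositiveOn K s t) {x : α} {y : β} (hx : x ∈ s) (hy : y ∈ t) :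
    0 < K x y := by
  simpa using hK (a := fun _ : Fin 1 => x) (b := fun _ => y)
    (Subsingleton.strictAnti _) (Subsingleton.strictAnti _) (fun _ => hx) fun _ => hy

theorem mul_left (hK : StrictTotallyPositiveOn K s t) {f : α → ℝ} (hf : ∀ x ∈ s, 0 < f x) :
    StrictTotallyPositiveOn (fun x y => f x * K x y) s t := by
  intro n a b ha hb has hbt
  have hdet := Matrix.det_mul_column (fun i => f (a i)) (Matrix.of fun i j => K (a i) (b j))
  simp only [Matrix.of_apply] at hdet
  rw [hdet]
  exact mul_pos (Finset.prod_pos fun i _ => hf _ (has i)) (hK ha hb has hbt)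

theorem mul_right (hK : StrictTotallyPositiveOn K s t) {g : β → ℝ} (hg : ∀ y ∈ t, 0 < g y) :
    StrictTotallyPositiveOn (fun x y => g y * K x y) s t := by
  intro n a b ha hb has hbt
  have hdet := Matrix.det_mul_row (fun j => g (b j)) (Matrix.of fun i j => K (a i) (b j))
  simp only [Matrix.of_apply] at hdet
  rw [hdet]
  exact mul_pos (Finset.prod_pos fun j _ => hg _ (hbt j)) (hK ha hb has hbt)

theorem comp_right {γ : Type*} [Preorder γ] (hK : StrictTotallyPositiveOn K s t) {g : γ → β}
    {u : Set γ} (hg : StrictMonoOn g u) (hmaps : MapsTo g u t) :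
    StrictTotallyPositiveOn (fun x z => K x (g z)) s u := fun _ _ b ha hb has hbu =>
  hK (b := g ∘ b) ha (fun _ _ hij => hg (hbu _) (hbu _) (hb hij)) has fun j => hmaps (hbu j)

theorem congr {L : α → β → ℝ} (hK : StrictTotallyPositiveOn K s t)
    (hKL : ∀ x ∈ s, ∀ y ∈ t, K x y = L x y) : StrictTotallyPositiveOn L s t := by
  intro n a b ha hb has hbt
  simpa only [hKL _ (has _) _ (hbt _)] using hK ha hb has hbt

theorem strictReverseRule (hK : StrictTotallyPositiveOn K s t) {n : ℕ} {a : Fin n → α}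
    {b : Fin n → β} (ha : StrictAnti a) (hb : StrictMono b) (has : ∀ i, a i ∈ s)
    (hbt : ∀ j, b j ∈ t) :
    0 < (-1 : ℝ) ^ (n * (n - 1) / 2) * (Matrix.of fun i j => K (a i) (b j)).det := by
  have hrev := Matrix.det_permute' Fin.revPerm (Matrix.of fun i j => K (a i) (b j))
  rw [sign_revPerm] at hrev
  push_cast at hrev
  rw [← hrev]
  exact hK ha (hb.comp_strictAnti Fin.rev_strictAnti) has fun j => hbt j.rev

theorem setIntegral_Ioi {β : Type*} [LinearOrder β] [TopologicalSpace β] [OrderClosedTopology β]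
    [DenselyOrdered β] [NoMaxOrder β] [MeasurableSpace β] [OpensMeasurableSpace β]
    {μ : Measure β} [μ.IsOpenPosMeasure] {K : α → β → ℝ} {l : β}
    (hK : StrictTotallyPositiveOn K s (Ioi l)) (hint : ∀ x ∈ s, IntegrableOn (K x) (Ioi l) μ) :
    StrictTotallyPositiveOn (fun x y => ∫ t in Ioi y, K x t ∂μ) s (Ici l) := by
  intro n a b ha hb has hbl
  cases n with
  | zero => simp
  | succ n =>
    have hint_Ioi (i j) : IntegrableOn (K (a i)) (Ioi (b j)) μ :=
      (hint _ (has i)).mono_set (Ioi_subset_Ioi (hbl j))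
    rw [det_setIntegral_Ioi_eq_det_setIntegral_descendingInterval hb.antitone hint_Ioi]
    refine det_setIntegral_pos (measurableSet_descendingInterval b)
      (measure_descendingInterval_ne_zero hb)
      (fun i j => (hint_Ioi i j).mono_set (descendingInterval_subset_Ioi b j))
      fun x hx => hK ha (strictAnti_of_mem_descendingInterval hb.antitone hx) has fun j => ?_
    exact (hbl j).trans_lt (descendingInterval_subset_Ioi b j (hx j))

end StrictTotallyPositiveOn

section Kernels

theorem setIntegral_Ioc_mul_exp_mul (d : ℝ) {x y : ℝ} (hxy : x ≤ y) :
    ∫ t in Ioc x y, d * Real.exp (d * t) = Real.exp (d * y) - Real.exp (d * x) := by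
  rw [← intervalIntegral.integral_of_le hxy]
  refine intervalIntegral.integral_eq_sub_of_hasDerivAt (f := fun t => Real.exp (d * t))
    (fun t _ => ?_) (by apply Continuous.intervalIntegrable; fun_prop)
  simpa [mul_comm] using ((hasDerivAt_id t).const_mul d).exp

theorem strictTotallyPositiveOn_exp_mul :
    StrictTotallyPositiveOn (fun x y : ℝ => Real.exp (x * y)) univ univ := by
  intro n
  induction n with
  | zero => intro a b _ _ _ _; simp
  | succ n ih =>
    intro a b ha hb _ _
    let d (i : Fin (n + 1)) : ℝ := a i - a 0
    have hd_neg (i : Fin n) : 0 < -d i.succ := by simpa [d] using ha i.succ_pos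
    have hd_anti : StrictAnti fun i : Fin n => d i.succ := fun i j hij =>
      sub_lt_sub_right (ha (Fin.succ_lt_succ_iff.2 hij)) _
    have hfactor : (Matrix.of fun i j => Real.exp (a i * b j)).det =
        (∏ j, Real.exp (a 0 * b j)) * (Matrix.of fun i j => Real.exp (d i * b j)).det := by
      rw [← Matrix.det_mul_row]
      simp only [Matrix.of_apply, ← Real.exp_add, d, sub_mul, add_sub_cancel]
    have hdiff : (Matrix.of fun i j => Real.exp (d i * b j)).det =
        (Matrix.of fun i j : Fin n =>
          ∫ t in Ioc (b j.succ) (b j.castSucc), -d i.succ * Real.exp (d i.succ * t)).det := by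
      rw [det_eq_det_col_sub_of_row_zero_eq_one _ (by simp [d])]
      simp only [neg_mul, integral_neg, Matrix.of_apply, neg_sub,
        setIntegral_Ioc_mul_exp_mul _ (hb (Fin.castSucc_lt_succ)).le]
    rw [hfactor, hdiff]
    refine mul_pos (Finset.prod_pos fun _ _ => Real.exp_pos _)
      (det_setIntegral_pos (fun _ => measurableSet_Ioc) (fun j => ?_) (fun i j => ?_) ?_)
    · simpa using hb j.castSucc_lt_succ
    · exact Continuous.integrableOn_Ioc (by fun_prop)
    · intro t ht
      have ht_anti : StrictAnti t := fun j k hjk =>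
        ((ht k).2.trans (hb.antitone (Fin.succ_le_castSucc_iff.2 hjk))).trans_lt (ht j).1
      have hminor := Matrix.det_mul_column (fun i : Fin n => -d i.succ)
        (Matrix.of fun i j => Real.exp (d i.succ * t j))
      simp only [Matrix.of_apply] at hminor
      rw [hminor]
      exact mul_pos (Finset.prod_pos fun i _ => hd_neg i)
        (ih hd_anti ht_anti (fun _ => mem_univ _) fun _ => mem_univ _)

theorem strictTotallyPositiveOn_rpow :
    StrictTotallyPositiveOn (fun s t : ℝ => t ^ s) univ (Ioi 0) :=
  (strictTotallyPositiveOn_exp_mul.comp_right Real.strictMonoOn_log (mapsTo_univ _ _)).congr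
    fun s _ t ht => by rw [Real.rpow_def_of_pos ht, mul_comm]

theorem strictTotallyPositiveOn_rpow_sub_one_mul_exp_neg :
    StrictTotallyPositiveOn (fun s t : ℝ => t ^ (s - 1) * Real.exp (-t)) univ (Ioi 0) :=
  (strictTotallyPositiveOn_rpow.mul_right (g := fun t => Real.exp (-t) / t)
    fun t ht => div_pos (Real.exp_pos _) ht).congr
      fun s _ t ht => by rw [Real.rpow_sub_one (ne_of_gt ht)]; ring

end Kernels

section UpperGamma

theorem integrableOn_rpow_sub_one_mul_exp_neg {s : ℝ} (hs : 0 < s) :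
    IntegrableOn (fun x : ℝ => x ^ (s - 1) * Real.exp (-x)) (Ioi 0) := by
  simpa only [mul_comm] using Real.GammaIntegral_convergent hs

theorem antitoneOn_upperGamma {s : ℝ} (hs : 0 < s) : AntitoneOn (upperGamma s) (Ici 0) := by
  intro x hx y _ hxy
  refine setIntegral_mono_set
    ((integrableOn_rpow_sub_one_mul_exp_neg hs).mono_set (Ioi_subset_Ioi hx)) ?_
    (Ioi_subset_Ioi hxy).eventuallyLE
  filter_upwards [ae_restrict_mem measurableSet_Ioi] with t ht
  exact mul_nonneg (Real.rpow_nonneg (hx.trans (le_of_lt ht)) _) (Real.exp_pos _).le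

theorem strictTotallyPositiveOn_upperGamma :
    StrictTotallyPositiveOn upperGamma (Ioi 0) (Ici 0) :=
  StrictTotallyPositiveOn.setIntegral_Ioi
    (fun _ _ _ ha hb _ hbt => strictTotallyPositiveOn_rpow_sub_one_mul_exp_neg ha hb
      (fun _ => mem_univ _) hbt)
    fun _ hs => integrableOn_rpow_sub_one_mul_exp_neg hs

theorem upperGamma_zero_pos {s : ℝ} (hs : 0 < s) : 0 < upperGamma s 0 :=
  strictTotallyPositiveOn_upperGamma.pos hs self_mem_Ici

theorem strictTotallyPositiveOn_upperGamma_div_upperGamma_zero :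
    StrictTotallyPositiveOn (fun s y => upperGamma s y / upperGamma s 0) (Ioi 0) (Ici 0) :=
  (strictTotallyPositiveOn_upperGamma.mul_left fun _ hs =>
    inv_pos.2 (upperGamma_zero_pos hs)).congr fun _ _ _ _ => inv_mul_eq_div _ _

end UpperGamma

theorem stmt_10_general {u : ℝ} (hu : 0 < u) {r : ℕ} {c v q : Fin r → ℝ} (hc : ∀ i, -u < c i)
    (hc_anti : StrictAnti c) (hv_anti : StrictAnti v) (hq : ∀ j, 0 ≤ q j)
    (hqv : ∀ j, upperGamma u (q j) / upperGamma u 0 = v j) :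
    0 < (-1 : ℝ) ^ (r * (r - 1) / 2) *
      (Matrix.of fun i j => upperGamma (c i + u) (q j) / upperGamma (c i + u) 0).det := by
  have hq_mono : StrictMono q := fun i j hij => by
    by_contra! hji
    refine (hv_anti hij).not_ge ?_
    rw [← hqv, ← hqv]
    exact div_le_div_of_nonneg_right (antitoneOn_upperGamma hu (hq j) (hq i) hji)
      (upperGamma_zero_pos hu).le
  exact strictTotallyPositiveOn_upperGamma_div_upperGamma_zero.strictReverseRule
    (hc_anti.add_const u) hq_mono (fun i => neg_lt_iff_pos_add.1 (hc i)) hq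

/-- Fix `u > 0`. The function
`(c,v) ↦ C_c(u,v) = Γ(c+u, Q⁻¹(u,v)) / Γ(c+u)` is strictly reverse-rule of order infinity
in `(c,v)`: for `c₁ > ⋯ > c_r > 0` and `1 > v₁ > ⋯ > v_r > 0`, writing `q_j > 0` for the
unique point with `Q(u, q_j) = v_j` (where `Q(u,q) = Γ(u,q)/Γ(u)` and `Γ(u) = Γ(u,0)`),
the quantity `(−1)^{r(r−1)/2} · det((C_{c_i}(u,v_j)))` is strictly positive. -/
theorem stmt_10 (u : ℝ) (hu : 0 < u) :
    ∀ r : ℕ, 1 ≤ r → ∀ c v q : Fin r → ℝ,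
      (∀ i : Fin r, 0 < c i) →
      (∀ i j : Fin r, i < j → c j < c i) →
      (∀ j : Fin r, 0 < v j) → (∀ j : Fin r, v j < 1) →
      (∀ i j : Fin r, i < j → v j < v i) →
      (∀ j : Fin r, 0 < q j) →
      (∀ j : Fin r, upperGamma u (q j) / upperGamma u 0 = v j) →
      0 < (-1 : ℝ) ^ (r * (r - 1) / 2) *
        Matrix.det (Matrix.of fun i j : Fin r =>
          upperGamma (c i + u) (q j) / upperGamma (c i + u) 0) := by
  intro r _ c v q hc hc_anti _ _ hv_anti hq hqv
  exact stmt_10_general hu (fun i => (neg_neg_of_pos hu).trans (hc i)) hc_anti hv_anti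
    (fun j => (hq j).le) hqv
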